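/- Let K be a field with char K = 0, n ≥ 2, and G = (G^{λμ}) an invertible symmetric n×n matrix over K. Let w̃ be the 4-linear form on K^n with components W̃^{abcd} = w̃(e_a, e_b, e_c, e_d) = G^{bc}G^{da} − G^{ab}G^{cd}. Then: (1) w̃ is Q-cyclic with Q = −id, i.e. W̃^{abcd} = −W̃^{dabc} for all indices; (2) w̃ satisfies condition (i): w̃(X, X₁, X₂, X₃) = 0 for all X₁, X₂, X₃ implies X = 0; (3) w̃ satisfies condition (iii′): for any finite families (Yᵢ), (Zᵢ) in K^n, if Σᵢ w̃(Yᵢ, Zᵢ, X₁, X₂) = 0 for all X₁, X₂ ∈ K^n then Σᵢ Yᵢ ⊗ Zᵢ = 0 in K^n ⊗ K^n. -/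

import Mathlib

open Matrix
open scoped TensorProduct

/-- The pairing `g(X,Y) = Σ_{a,b} G^{ab} X_a Y_b` of a symmetric matrix `G`. -/
def gPair {K : Type*} [Field K] {n : ℕ} (G : Matrix (Fin n) (Fin n) K)
    (X Y : Fin n → K) : K :=
  ∑ a : Fin n, ∑ b : Fin n, G a b * X a * Y b

/-- The super Yang–Mills 4-linear form, with components
`W̃^{abcd} = G^{bc}G^{da} − G^{ab}G^{cd}`. -/
def symForm {K : Type*} [Field K] {n : ℕ} (G : Matrix (Fin n) (Fin n) K)
    (X₁ X₂ X₃ X₄ : Fin n → K) : K :=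
  gPair G X₂ X₃ * gPair G X₄ X₁ - gPair G X₁ X₂ * gPair G X₃ X₄

/-!
Identify `∑ Yᵢ ⊗ Zᵢ` with the matrix `T = ∑ Yᵢ Zᵢᵀ`. For symmetric `G` the form
`∑ w̃(Yᵢ, Zᵢ, ·, ·)` has matrix `G T G - tr(G T) G`. If it vanishes and `G` is invertible, then
`G T = tr(G T) • 1`; taking traces, `tr(G T) = n tr(G T)`, so `G T = 0` as soon as `n ≠ 1` in `K`,
and hence `T = 0`. Condition (i) is the special case of the tensor `X ⊗ X`.
-/

section Matrix

variable {R n : Type*} [CommRing R] [Fintype n] [DecidableEq n]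

theorem eq_zero_of_eq_trace_smul_one [NoZeroDivisors R] (hn : (Fintype.card n : R) ≠ 1)
    {A : Matrix n n R} (hA : A = A.trace • 1) : A = 0 := by
  have htrace : A.trace = A.trace * Fintype.card n := by
    simpa only [trace_smul, trace_one, smul_eq_mul] using congrArg trace hA
  have hmul : A.trace * (Fintype.card n - 1) = 0 := by linear_combination -htrace
  rw [hA, (mul_eq_zero_iff_right (sub_ne_zero.2 hn)).1 hmul, zero_smul]

/-- The contraction of a two-tensor, written as a matrix `T`, with the first two arguments of the
super Yang–Mills form of `G`. For symmetric `G` the value is the matrix of the resulting bilinear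
form in the remaining two arguments, taken in reverse order. -/
def symContraction (G : Matrix n n R) : Matrix n n R →ₗ[R] Matrix n n R :=
  LinearMap.mulLeftRight R (G, G) -
    (traceLinearMap n R R ∘ₗ LinearMap.mulLeft R G).smulRight G

theorem symContraction_apply (G T : Matrix n n R) :
    symContraction G T = G * T * G - (G * T).trace • G :=
  rfl

theorem symContraction_injective [NoZeroDivisors R] (hn : (Fintype.card n : R) ≠ 1)
    {G : Matrix n n R} (hG : IsUnit G) : Function.Injective (symContraction G) := by
  refine (injective_iff_map_eq_zero _).2 fun T hT => ?_
  have hscalar : G * T = (G * T).trace • 1 := by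
    refine hG.mul_right_cancel ?_
    rwa [smul_one_mul, ← sub_eq_zero, ← symContraction_apply]
  exact hG.mul_right_eq_zero.1 (eq_zero_of_eq_trace_smul_one hn hscalar)

end Matrix

theorem sum_tmul_eq_zero_of_sum_vecMulVec_eq_zero {R ι m n : Type*} [CommSemiring R] [Fintype ι]
    [Finite n] {Y : ι → m → R} {Z : ι → n → R}
    (h : ∑ i, vecMulVec (Y i) (Z i) = 0) : ∑ i, Y i ⊗ₜ[R] Z i = 0 := by
  classical
  cases nonempty_fintype n
  refine (TensorProduct.piScalarRight R R (m → R) n).injective ?_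
  ext b a
  simpa [Matrix.sum_apply, vecMulVec_apply, mul_comm] using congrFun₂ h a b

section Form

variable {K : Type*} [Field K] {n : ℕ} {G : Matrix (Fin n) (Fin n) K}

theorem gPair_eq_toBilin' (G : Matrix (Fin n) (Fin n) K) (X Y : Fin n → K) :
    gPair G X Y = toBilin' G X Y := by
  simp only [gPair, toBilin'_apply, mul_comm (G _ _)]

theorem gPair_eq_dotProduct_mulVec (G : Matrix (Fin n) (Fin n) K) (X Y : Fin n → K) :
    gPair G X Y = X ⬝ᵥ G *ᵥ Y := by
  rw [gPair_eq_toBilin', toBilin'_apply']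

theorem gPair_comm (hG : G.IsSymm) (X Y : Fin n → K) : gPair G X Y = gPair G Y X := by
  rw [gPair_eq_dotProduct_mulVec, gPair_eq_dotProduct_mulVec, dotProduct_mulVec,
    ← mulVec_transpose, hG.eq, dotProduct_comm]

theorem gPair_neg_left (X Y : Fin n → K) : gPair G (-X) Y = -gPair G X Y := by
  simp only [gPair_eq_dotProduct_mulVec, neg_dotProduct]

theorem gPair_neg_right (X Y : Fin n → K) : gPair G X (-Y) = -gPair G X Y := by
  simp only [gPair_eq_dotProduct_mulVec, mulVec_neg, dotProduct_neg]

theorem symForm_neg_left (X₁ X₂ X₃ X₄ : Fin n → K) :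
    symForm G (-X₁) X₂ X₃ X₄ = -symForm G X₁ X₂ X₃ X₄ := by
  simp only [symForm, gPair_neg_left, gPair_neg_right]
  ring

theorem symForm_cyclic (hG : G.IsSymm) (X₁ X₂ X₃ X₄ : Fin n → K) :
    symForm G X₁ X₂ X₃ X₄ = -symForm G X₄ X₁ X₂ X₃ := by
  rw [symForm, symForm, gPair_comm hG X₃ X₄]
  ring

theorem symForm_eq_toBilin'_symContraction (hG : G.IsSymm) (Y Z X₁ X₂ : Fin n → K) :
    symForm G Y Z X₁ X₂ = toBilin' (symContraction G (vecMulVec Y Z)) X₂ X₁ := by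
  have hprod : gPair G Z X₁ * gPair G X₂ Y = X₂ ⬝ᵥ (G * vecMulVec Y Z * G) *ᵥ X₁ := by
    rw [mul_vecMulVec, vecMulVec_mul, vecMulVec_mulVec, dotProduct_smul, op_smul_eq_smul,
      smul_eq_mul, gPair_eq_dotProduct_mulVec, gPair_eq_dotProduct_mulVec, dotProduct_mulVec Z]
  have htrace : gPair G Y Z = (G * vecMulVec Y Z).trace := by
    rw [gPair_comm hG, gPair_eq_dotProduct_mulVec, mul_vecMulVec, trace_vecMulVec, dotProduct_comm]
  rw [symForm, hprod, htrace, gPair_comm hG, gPair_eq_dotProduct_mulVec, symContraction_apply,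
    toBilin'_apply', sub_mulVec, dotProduct_sub, smul_mulVec, dotProduct_smul, smul_eq_mul]

theorem sum_vecMulVec_eq_zero_of_sum_symForm_eq_zero {ι : Type*} [Fintype ι] (hG : G.IsSymm)
    (hunit : IsUnit G) (hn : (n : K) ≠ 1) {Y Z : ι → Fin n → K}
    (h : ∀ X₁ X₂, ∑ i, symForm G (Y i) (Z i) X₁ X₂ = 0) : ∑ i, vecMulVec (Y i) (Z i) = 0 := by
  refine (map_eq_zero_iff _ (symContraction_injective (by simpa using hn) hunit)).1 ?_
  refine (map_eq_zero_iff _ toBilin'.injective).1 (LinearMap.ext₂ fun X₂ X₁ => ?_)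
  simpa only [map_sum, LinearMap.sum_apply, LinearMap.zero_apply,
    symForm_eq_toBilin'_symContraction hG] using h X₁ X₂

theorem eq_zero_of_symForm_eq_zero (hG : G.IsSymm) (hunit : IsUnit G) (hn : (n : K) ≠ 1)
    {X : Fin n → K} (h : ∀ X₁ X₂ X₃, symForm G X X₁ X₂ X₃ = 0) : X = 0 := by
  have hXX : ∑ _ : Unit, vecMulVec X X = 0 :=
    sum_vecMulVec_eq_zero_of_sum_symForm_eq_zero hG hunit hn fun X₁ X₂ => by simp [h]
  simpa using hXX

end Form

theorem stmt_15_general (K : Type*) [Field K] (n : ℕ) (hn : (n : K) ≠ 1)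
    (G : Matrix (Fin n) (Fin n) K) (hsym : Gᵀ = G) (hinv : IsUnit G) :
    (∀ X₁ X₂ X₃ X₄ : Fin n → K,
      symForm G X₁ X₂ X₃ X₄ = symForm G (-X₄) X₁ X₂ X₃ ∧
      symForm G X₁ X₂ X₃ X₄ = -symForm G X₄ X₁ X₂ X₃) ∧
    (∀ X : Fin n → K,
      (∀ X₁ X₂ X₃ : Fin n → K, symForm G X X₁ X₂ X₃ = 0) → X = 0) ∧
    (∀ (k : ℕ) (Y Z : Fin k → (Fin n → K)),
      (∀ X₁ X₂ : Fin n → K, ∑ i, symForm G (Y i) (Z i) X₁ X₂ = 0) →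
      ∑ i, (Y i) ⊗ₜ[K] (Z i) = (0 : TensorProduct K (Fin n → K) (Fin n → K))) := by
  refine ⟨fun X₁ X₂ X₃ X₄ => ⟨?_, symForm_cyclic hsym X₁ X₂ X₃ X₄⟩,
    fun X h => eq_zero_of_symForm_eq_zero hsym hinv hn h,
    fun k Y Z h => sum_tmul_eq_zero_of_sum_vecMulVec_eq_zero
      (sum_vecMulVec_eq_zero_of_sum_symForm_eq_zero hsym hinv hn h)⟩
  rw [symForm_neg_left, symForm_cyclic hsym]

/-- over a field of characteristic zero, for `G` an invertible symmetric
`n×n` matrix (`n = m + 2 ≥ 2`), the super Yang–Mills 4-linear form `w̃` satisfies: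
(1) it is `Q`-cyclic with `Q = −id`, i.e. `w̃(X₁,X₂,X₃,X₄) = −w̃(X₄,X₁,X₂,X₃)`;
(2) condition (i): `w̃(X,·,·,·) = 0` identically implies `X = 0`;
(3) condition (iii′): `Σᵢ w̃(Yᵢ, Zᵢ, X₁, X₂) = 0` for all `X₁, X₂` implies
`Σᵢ Yᵢ ⊗ Zᵢ = 0`. -/
theorem stmt_15 (K : Type*) [Field K] [CharZero K] (m : ℕ)
    (G : Matrix (Fin (m + 2)) (Fin (m + 2)) K) (hsym : Gᵀ = G) (hinv : IsUnit G) :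
    (∀ X₁ X₂ X₃ X₄ : Fin (m + 2) → K,
      symForm G X₁ X₂ X₃ X₄ = symForm G (-X₄) X₁ X₂ X₃ ∧
      symForm G X₁ X₂ X₃ X₄ = -symForm G X₄ X₁ X₂ X₃) ∧
    (∀ X : Fin (m + 2) → K,
      (∀ X₁ X₂ X₃ : Fin (m + 2) → K, symForm G X X₁ X₂ X₃ = 0) → X = 0) ∧
    (∀ (k : ℕ) (Y Z : Fin k → (Fin (m + 2) → K)),
      (∀ X₁ X₂ : Fin (m + 2) → K, ∑ i, symForm G (Y i) (Z i) X₁ X₂ = 0) →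
      ∑ i, (Y i) ⊗ₜ[K] (Z i) =
        (0 : TensorProduct K (Fin (m + 2) → K) (Fin (m + 2) → K))) :=
  stmt_15_general K (m + 2) (by norm_cast; omega) G hsym hinv
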